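/- arXiv:1304.5775 — 3 statements merged into one kernel-verified Lean document; each statement's English description precedes it below -/
import Mathlib

section
/- Let I be the radical bihomogeneous ideal of an (a,b)-grid Z of points in X = ℙ¹×ℙ¹, with a, b ≥ 1. Then for all m ≥ 1, α*(I^{(m)}) = max{a_m, b_m}, where (a_m, b_m) is the sequence associated to (a,b). -/
open MvPolynomial

noncomputable section

/-- The bi-graded polynomial ring `ℂ[x₀,x₁,y₀,y₁]`:
the first `Fin 2` summand indexes the variables `x₀,x₁`,
the second the variables `y₀,y₁`. -/
abbrev R4 : Type := MvPolynomial (Fin 2 ⊕ Fin 2) ℂ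

/-- The weight function giving the bi-grading of `R4`. -/
def biWeight : Fin 2 ⊕ Fin 2 → ℕ × ℕ := Sum.elim (fun _ => (1, 0)) (fun _ => (0, 1))

/-- `F` is a (possibly zero) form of bidegree `(p,q)`, i.e. homogeneous of degree `p`
in `x₀,x₁` and homogeneous of degree `q` in `y₀,y₁`. -/
def IsBiForm (F : R4) (p q : ℕ) : Prop :=
  IsWeightedHomogeneous biWeight F (p, q)

/-- The projective line `ℙ¹` over `ℂ`. -/
abbrev ProjLine := Projectivization ℂ (Fin 2 → ℂ)

/-- The bi-homogeneous prime ideal of a point `P = ([a:b],[c:d])` of `X = ℙ¹ × ℙ¹`,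
generated by `b·x₀ - a·x₁` and `d·y₀ - c·y₁`. -/
def pointIdeal (P : ProjLine × ProjLine) : Ideal R4 :=
  Ideal.span
    { C (P.1.rep 1) * X (Sum.inl 0) - C (P.1.rep 0) * X (Sum.inl 1),
      C (P.2.rep 1) * X (Sum.inr 0) - C (P.2.rep 0) * X (Sum.inr 1) }

/-- The `m`-th symbolic power of the radical ideal of the finite set of points `Z ⊂ X`:
`I^{(m)} = ⋂_{P ∈ Z} I(P)^m`.  For `m = 1` this is the radical ideal `I = I(Z)` itself. -/
def symbPow (Z : Finset (ProjLine × ProjLine)) (m : ℕ) : Ideal R4 :=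
  ⨅ P ∈ Z, pointIdeal P ^ m

/-- `α*(J)`: the least `t ≥ 0` such that `J` contains a nonzero form of bidegree `(t,t)`. -/
def alphaStar (J : Ideal R4) : ℕ :=
  sInf {t : ℕ | ∃ F ∈ J, F ≠ 0 ∧ IsBiForm F t t}

/-- `α⁺(J)`: the least `d ≥ 0` such that `J` contains a nonzero form of bidegree `(p,q)`
with `p + q = d`. -/
def alphaPlus (J : Ideal R4) : ℕ :=
  sInf {d : ℕ | ∃ p q : ℕ, p + q = d ∧ ∃ F ∈ J, F ≠ 0 ∧ IsBiForm F p q}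

/-- The sequence `(a_m, b_m)` associated to `(a,b)`: `(a₀,b₀) = (0,0)` and
`(a_m,b_m) = (a_{m-1}+a, b_{m-1})` if `a_{m-1}+a ≤ b_{m-1}+b`, and
`(a_m,b_m) = (a_{m-1}, b_{m-1}+b)` otherwise. -/
def gridSeq (a b : ℕ) : ℕ → ℕ × ℕ
  | 0 => (0, 0)
  | m + 1 =>
      if (gridSeq a b m).1 + a ≤ (gridSeq a b m).2 + b then
        ((gridSeq a b m).1 + a, (gridSeq a b m).2)
      else
        ((gridSeq a b m).1, (gridSeq a b m).2 + b)

/-- bidegree bound for elements of `ℂ[s][t]` -/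
def Bnd (p q : ℕ) (f : Polynomial (Polynomial ℂ)) : Prop :=
  f.natDegree ≤ q ∧ ∀ j, (f.coeff j).natDegree ≤ p

lemma Bnd.mul {p q p' q' : ℕ} {f g : Polynomial (Polynomial ℂ)} (hf : Bnd p q f)
    (hg : Bnd p' q' g) : Bnd (p + p') (q + q') (f * g) := by
  refine ⟨Polynomial.natDegree_mul_le.trans (add_le_add hf.1 hg.1), fun j => ?_⟩
  rw [Polynomial.coeff_mul]
  refine Polynomial.natDegree_sum_le_of_forall_le _ _ (fun x _ => ?_)
  exact Polynomial.natDegree_mul_le.trans (add_le_add (hf.2 _) (hg.2 _))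

lemma Bnd.sum {ι : Type*} {p q : ℕ} (S : Finset ι) {f : ι → Polynomial (Polynomial ℂ)}
    (hf : ∀ i ∈ S, Bnd p q (f i)) : Bnd p q (∑ i ∈ S, f i) := by
  refine ⟨Polynomial.natDegree_sum_le_of_forall_le _ _ (fun i hi => (hf i hi).1), fun j => ?_⟩
  rw [Polynomial.finsetSum_coeff]
  exact Polynomial.natDegree_sum_le_of_forall_le _ _ (fun i hi => (hf i hi).2 j)

lemma Bnd.C_C (z : ℂ) : Bnd 0 0 (Polynomial.C (Polynomial.C z)) := by
  refine ⟨by simp, fun j => ?_⟩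
  rw [Polynomial.coeff_C]; split_ifs <;> simp

lemma Bnd.pow {p q : ℕ} {f : Polynomial (Polynomial ℂ)} (hf : Bnd p q f) (n : ℕ) :
    Bnd (n * p) (n * q) (f ^ n) := by
  induction n with
  | zero => simpa using Bnd.C_C 1
  | succ n ih =>
    rw [pow_succ, add_mul, add_mul, one_mul, one_mul]
    exact ih.mul hf

/-- blow-up chart at `(σ, τ)` -/
def psi (σ τ : ℂ) : Polynomial (Polynomial ℂ) →+* Polynomial (Polynomial ℂ) :=
  Polynomial.eval₂RingHom
    (Polynomial.eval₂RingHom (Polynomial.C.comp Polynomial.C)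
      (Polynomial.C (Polynomial.C σ) + Polynomial.X * Polynomial.C Polynomial.X))
    (Polynomial.C (Polynomial.C τ) + Polynomial.X)

/-- specialization back -/
def spec (τ : ℂ) : Polynomial (Polynomial ℂ) →+* Polynomial ℂ :=
  Polynomial.eval₂RingHom (Polynomial.C.comp (Polynomial.evalRingHom 0))
    (Polynomial.X - Polynomial.C τ)

lemma spec_psi (σ τ : ℂ) (f : Polynomial (Polynomial ℂ)) :
    spec τ (psi σ τ f) = f.map (Polynomial.evalRingHom σ) := by
  have : (spec τ).comp (psi σ τ) = Polynomial.mapRingHom (Polynomial.evalRingHom σ) := by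
    ext <;> simp [spec, psi]
  exact congrArg (fun h => h f) this

lemma affine (S T : Finset ℂ) (m : ℕ) : ∀ (p q : ℕ) (f : Polynomial (Polynomial ℂ)),
    f ≠ 0 → Bnd p q f →
    (∀ σ ∈ S, ∀ τ ∈ T, Polynomial.X ^ m ∣ psi σ τ f) →
    ∃ s ≤ m, s * S.card ≤ p ∧ (m - s) * T.card ≤ q := by
  induction m with
  | zero => intro p q f _ _ _; exact ⟨0, le_rfl, by simp, by simp⟩
  | succ m ih =>
    intro p q f hf hB hv
    by_cases hq : (m + 1) * T.card ≤ q
    · exact ⟨0, by simp, by simp, by simpa using hq⟩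
    push Not at hq
    -- f vanishes on each line
    have hz : ∀ σ ∈ S, f.map (Polynomial.evalRingHom σ) = 0 := by
      intro σ hσ
      by_contra hne
      have hd : ∏ τ ∈ T, (Polynomial.X - Polynomial.C τ) ^ (m + 1) ∣
          f.map (Polynomial.evalRingHom σ) := by
        refine Finset.prod_dvd_of_coprime ?_ ?_
        · intro x _ y _ hxy
          exact (Polynomial.isCoprime_X_sub_C_of_isUnit_sub
            (sub_ne_zero.2 hxy).isUnit).pow
        · intro τ hτ
          have := map_dvd (spec τ) (hv σ hσ τ hτ)
          rw [spec_psi] at this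
          simpa [spec] using this
      have h1 := Polynomial.natDegree_le_of_dvd hd hne
      rw [Polynomial.natDegree_prod_of_monic _ _
        (fun τ _ => (Polynomial.monic_X_sub_C τ).pow _)] at h1
      simp only [Polynomial.natDegree_pow, Polynomial.natDegree_X_sub_C, mul_one,
        Finset.sum_const, smul_eq_mul] at h1
      have h2 := (Polynomial.natDegree_map_le (f := Polynomial.evalRingHom σ) (p := f)).trans hB.1
      rw [mul_comm] at h1
      omega
    set g : Polynomial ℂ := ∏ σ ∈ S, (Polynomial.X - Polynomial.C σ) with hg
    have hgm : g.Monic := Polynomial.monic_prod_of_monic _ _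
      (fun τ _ => (Polynomial.monic_X_sub_C τ))
    have hgd : g.natDegree = S.card := by
      rw [hg, Polynomial.natDegree_prod_of_monic _ _
        (fun τ _ => (Polynomial.monic_X_sub_C τ))]
      simp
    have hdv : Polynomial.C g ∣ f := by
      rw [Polynomial.C_dvd_iff_dvd_coeff]
      intro i
      refine Finset.prod_dvd_of_coprime ?_ ?_
      · intro x _ y _ hxy
        exact (Polynomial.isCoprime_X_sub_C_of_isUnit_sub (sub_ne_zero.2 hxy).isUnit)
      · intro σ hσ
        rw [Polynomial.dvd_iff_isRoot]
        have := congrArg (fun h => Polynomial.coeff h i) (hz σ hσ)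
        simpa [Polynomial.coeff_map] using this
    obtain ⟨f', rfl⟩ := hdv
    have hf' : f' ≠ 0 := right_ne_zero_of_mul hf
    have hco : ∀ j, f'.coeff j ≠ 0 → S.card + (f'.coeff j).natDegree ≤ p := by
      intro j hj
      have := hB.2 j
      rwa [Polynomial.coeff_C_mul, hgm.natDegree_mul' hj, hgd] at this
    have hSp : S.card ≤ p := by
      have := hco f'.natDegree (by simpa using hf')
      omega
    have hB' : Bnd (p - S.card) q f' := by
      refine ⟨?_, fun j => ?_⟩
      · have := hB.1
        rwa [Polynomial.natDegree_C_mul hgm.ne_zero] at this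
      · by_cases hj : f'.coeff j = 0
        · simp [hj]
        · have := hco j hj
          omega
    have hX : Prime (Polynomial.X : Polynomial (Polynomial ℂ)) := Polynomial.prime_X
    obtain ⟨s, hs, h1, h2⟩ := ih (p - S.card) q f' hf' hB' (by
      intro σ hσ τ hτ
      have h := hv σ hσ τ hτ
      rw [map_mul, hg, ← Finset.mul_prod_erase _ _ hσ, map_mul, map_mul] at h
      have e : psi σ τ (Polynomial.C (Polynomial.X - Polynomial.C σ)) =
          Polynomial.X * Polynomial.C Polynomial.X := by
        simp [psi]
      rw [e, pow_succ', mul_assoc, mul_assoc] at h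
      have h := (mul_dvd_mul_iff_left hX.ne_zero).1 h
      rw [← mul_assoc] at h
      refine hX.pow_dvd_of_dvd_mul_left m ?_ h
      intro hd
      rcases hX.dvd_or_dvd hd with hd | hd
      · rw [Polynomial.X_dvd_iff] at hd
        simp at hd
      · rw [map_prod, map_prod] at hd
        obtain ⟨x, hx, hd⟩ := hX.exists_mem_finset_dvd hd
        rw [Polynomial.X_dvd_iff] at hd
        simp [psi, sub_eq_zero] at hd
        exact (Finset.mem_erase.1 hx).1 hd.symm)
    refine ⟨s + 1, by omega, ?_, ?_⟩
    · rw [add_mul, one_mul]; omega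
    · simpa using h2

lemma grid_inv (a b m : ℕ) : ∃ s ≤ m, (gridSeq a b m) = (s * a, (m - s) * b) ∧
    s * a ≤ (m - s) * b + b ∧ (m - s) * b ≤ s * a + a := by
  induction m with
  | zero => exact ⟨0, by simp [gridSeq]⟩
  | succ m ih =>
    obtain ⟨s, hs, h, h1, h2⟩ := ih
    rw [gridSeq, h]
    dsimp only
    split_ifs with hc
    · refine ⟨s + 1, by omega, ?_, ?_, ?_⟩
      · simp [add_mul]
      · simp only [add_mul, Nat.add_sub_add_right]; omega
      · simp only [add_mul, Nat.add_sub_add_right]; omega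
    · have e : m + 1 - s = (m - s) + 1 := by omega
      refine ⟨s, by omega, ?_, ?_, ?_⟩
      · rw [e, add_mul, one_mul]
      · rw [e, add_mul, one_mul]; omega
      · rw [e, add_mul, one_mul]; omega

/-- the linear form of a point in the `x`-variables (`inl`) or `y`-variables (`inr`) -/
def lin (e : Fin 2 → Fin 2 ⊕ Fin 2) (P : ProjLine) : R4 :=
  C (P.rep 1) * X (e 0) - C (P.rep 0) * X (e 1)

lemma rep_ne (P : ProjLine) : ¬ (P.rep 0 = 0 ∧ P.rep 1 = 0) := by
  rintro ⟨h0, h1⟩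
  apply P.rep_nonzero
  ext i; fin_cases i <;> simpa

lemma lin_ne (e : Fin 2 → Fin 2 ⊕ Fin 2) (he : Function.Injective e) (P : ProjLine) :
    lin e P ≠ 0 := by
  intro h
  apply rep_ne P
  have h01 : e 0 ≠ e 1 := fun h => by simpa using he h
  constructor
  · have := congrArg (eval (fun i => if i = e 1 then (1 : ℂ) else 0)) h
    simpa [lin, h01] using this
  · have := congrArg (eval (fun i => if i = e 0 then (1 : ℂ) else 0)) h
    simpa [lin, h01.symm] using this

lemma lin_hom (e : Fin 2 → Fin 2 ⊕ Fin 2) (w : ℕ × ℕ) (he : ∀ i, biWeight (e i) = w)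
    (P : ProjLine) : IsWeightedHomogeneous biWeight (lin e P) w := by
  refine IsWeightedHomogeneous.sub ?_ ?_
  · have := (isWeightedHomogeneous_C biWeight (P.rep 1)).mul
      (isWeightedHomogeneous_X ℂ biWeight (e 0))
    rwa [he, zero_add] at this
  · have := (isWeightedHomogeneous_C biWeight (P.rep 0)).mul
      (isWeightedHomogeneous_X ℂ biWeight (e 1))
    rwa [he, zero_add] at this

lemma upper (ZV ZH : Finset ProjLine) (m s t : ℕ) (hs : s ≤ m) (h1 : s * ZV.card ≤ t)
    (h2 : (m - s) * ZH.card ≤ t) :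
    ∃ F ∈ symbPow (ZV ×ˢ ZH) m, F ≠ 0 ∧ IsBiForm F t t := by
  refine ⟨(∏ P ∈ ZV, lin Sum.inl P) ^ s * (∏ P ∈ ZH, lin Sum.inr P) ^ (m - s) *
    (X (Sum.inl 0) ^ (t - s * ZV.card) * X (Sum.inr 0) ^ (t - (m - s) * ZH.card)), ?_, ?_, ?_⟩
  · simp only [symbPow, Ideal.mem_iInf]
    rintro ⟨P, Q⟩ hPQ
    rw [Finset.mem_product] at hPQ
    refine Ideal.mul_mem_right _ _ ?_
    have : pointIdeal (P, Q) ^ m = pointIdeal (P, Q) ^ s * pointIdeal (P, Q) ^ (m - s) := by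
      rw [← pow_add]; congr 1; omega
    rw [this]
    refine Ideal.mul_mem_mul (Ideal.pow_mem_pow ?_ _) (Ideal.pow_mem_pow ?_ _)
    · refine Ideal.mem_of_dvd _ (Finset.dvd_prod_of_mem _ hPQ.1) ?_
      exact Ideal.subset_span (by simp [lin])
    · refine Ideal.mem_of_dvd _ (Finset.dvd_prod_of_mem _ hPQ.2) ?_
      exact Ideal.subset_span (by simp [lin])
  · refine mul_ne_zero (mul_ne_zero (pow_ne_zero _ ?_) (pow_ne_zero _ ?_))
      (mul_ne_zero (pow_ne_zero _ (X_ne_zero _)) (pow_ne_zero _ (X_ne_zero _)))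
    · exact Finset.prod_ne_zero_iff.2 fun P _ => lin_ne _ Sum.inl_injective P
    · exact Finset.prod_ne_zero_iff.2 fun P _ => lin_ne _ Sum.inr_injective P
  · have A := (IsWeightedHomogeneous.prod (w := biWeight) ZV (lin Sum.inl) (fun _ => (1, 0))
      (fun P _ => lin_hom Sum.inl _ (fun _ => rfl) P)).pow s
    have B := (IsWeightedHomogeneous.prod (w := biWeight) ZH (lin Sum.inr) (fun _ => (0, 1))
      (fun P _ => lin_hom Sum.inr _ (fun _ => rfl) P)).pow (m - s)
    have D := (isWeightedHomogeneous_X ℂ biWeight (Sum.inl 0)).pow (t - s * ZV.card)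
    have E := (isWeightedHomogeneous_X ℂ biWeight (Sum.inr 0)).pow (t - (m - s) * ZH.card)
    have := (A.mul B).mul (D.mul E)
    unfold IsBiForm
    convert this using 1
    simp [biWeight]
    omega

/-- dehomogenization -/
def theta (c d : ℂ) : R4 →+* Polynomial (Polynomial ℂ) :=
  eval₂Hom (Polynomial.C.comp Polynomial.C)
    (Sum.elim ![Polynomial.C Polynomial.X, Polynomial.C (1 + Polynomial.C c * Polynomial.X)]
      ![Polynomial.X, 1 + Polynomial.C (Polynomial.C d) * Polynomial.X])

lemma weight_eq {F : R4} {p q : ℕ} (hF : IsBiForm F p q) {d : (Fin 2 ⊕ Fin 2) →₀ ℕ}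
    (hd : coeff d F ≠ 0) :
    d (Sum.inl 0) + d (Sum.inl 1) = p ∧ d (Sum.inr 0) + d (Sum.inr 1) = q := by
  have := hF hd
  rw [Finsupp.weight_apply, Finsupp.sum_fintype _ _ (by simp)] at this
  have h1 := congrArg Prod.fst this
  have h2 := congrArg Prod.snd this
  simp [biWeight, Fintype.sum_sum_type, Fin.sum_univ_two] at h1 h2
  exact ⟨h1, h2⟩

lemma bnd1 (u v : ℂ) : Bnd 1 0 (Polynomial.C (Polynomial.C u + Polynomial.C v * Polynomial.X)) := by
  refine ⟨(Polynomial.natDegree_C _).le, fun j => ?_⟩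
  rw [Polynomial.coeff_C]
  split_ifs
  · compute_degree
  · simp

lemma bnd2 (u v : ℂ) : Bnd 0 1 (Polynomial.C (Polynomial.C u) +
    Polynomial.C (Polynomial.C v) * Polynomial.X) := by
  refine ⟨by compute_degree, fun j => ?_⟩
  rw [Polynomial.coeff_add, Polynomial.coeff_C, Polynomial.coeff_C_mul, Polynomial.coeff_X]
  split_ifs <;> compute_degree

lemma theta_bnd (c d : ℂ) {F : R4} {p q : ℕ} (hF : IsBiForm F p q) : Bnd p q (theta c d F) := by
  rw [theta, coe_eval₂Hom, eval₂_eq']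
  refine Bnd.sum _ fun e he => ?_
  obtain ⟨h1, h2⟩ := weight_eq hF (mem_support_iff.1 he)
  rw [Fintype.prod_sum_type, Fin.prod_univ_two, Fin.prod_univ_two]
  have A := (bnd1 0 1).pow (e (Sum.inl 0))
  have A' := (bnd1 1 c).pow (e (Sum.inl 1))
  have B := (bnd2 0 1).pow (e (Sum.inr 0))
  have B' := (bnd2 1 d).pow (e (Sum.inr 1))
  have := (Bnd.C_C (coeff e F)).mul ((A.mul A').mul (B.mul B'))
  simp only [mul_one, mul_zero, zero_add, add_zero, h1, h2] at this
  simpa using this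

lemma eval_scale {F : R4} {p q : ℕ} (hF : IsBiForm F p q) (α β : ℂ) (z : Fin 2 ⊕ Fin 2 → ℂ) :
    eval (Sum.elim (fun i => α * z (Sum.inl i)) (fun i => β * z (Sum.inr i))) F =
      α ^ p * β ^ q * eval z F := by
  rw [eval_eq', eval_eq', Finset.mul_sum]
  refine Finset.sum_congr rfl fun e he => ?_
  obtain ⟨h1, h2⟩ := weight_eq hF (mem_support_iff.1 he)
  simp only [Fintype.prod_sum_type, Fin.prod_univ_two, Sum.elim_inl, Sum.elim_inr, mul_pow,
    ← h1, ← h2, pow_add]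
  ring

lemma theta_eval (c d s t : ℂ) (F : R4) :
    ((theta c d F).eval (Polynomial.C t)).eval s =
      eval (Sum.elim ![s, 1 + c * s] ![t, 1 + d * t]) F := by
  have : ((Polynomial.evalRingHom s).comp (Polynomial.evalRingHom (Polynomial.C t))).comp
      (theta c d) = eval (Sum.elim ![s, 1 + c * s] ![t, 1 + d * t]) := by
    apply MvPolynomial.ringHom_ext
    · intro r; simp [theta]
    · rintro (i | i) <;> fin_cases i <;> simp [theta]
  exact congrArg (fun h => h F) this

lemma theta_ne (c d : ℂ) {F : R4} {p q : ℕ} (hF : IsBiForm F p q) (h0 : F ≠ 0) :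
    theta c d F ≠ 0 := by
  intro h
  have hl : ∀ (e : Fin 2 → Fin 2 ⊕ Fin 2) (he : Function.Injective e) (c : ℂ),
      (X (e 1) - C c * X (e 0) : R4) ≠ 0 := by
    intro e he c h
    have h01 : e 0 ≠ e 1 := fun h => by simpa using he h
    have := congrArg (eval (fun i => if i = e 1 then (1 : ℂ) else 0)) h
    simp [h01] at this
  have key : F * ((X (Sum.inl 1) - C c * X (Sum.inl 0)) *
      (X (Sum.inr 1) - C d * X (Sum.inr 0))) = 0 := by
    apply MvPolynomial.funext
    intro z
    simp only [map_mul, map_sub, eval_X, eval_C, map_zero]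
    by_cases hα : z (Sum.inl 1) - c * z (Sum.inl 0) = 0
    · simp [hα]
    by_cases hβ : z (Sum.inr 1) - d * z (Sum.inr 0) = 0
    · simp [hβ]
    set α := z (Sum.inl 1) - c * z (Sum.inl 0) with hα'
    set β := z (Sum.inr 1) - d * z (Sum.inr 0) with hβ'
    have h1 := theta_eval c d (z (Sum.inl 0) / α) (z (Sum.inr 0) / β) F
    have h2 := eval_scale hF α β (Sum.elim ![z (Sum.inl 0) / α, 1 + c * (z (Sum.inl 0) / α)]
      ![z (Sum.inr 0) / β, 1 + d * (z (Sum.inr 0) / β)])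
    rw [← h1, h] at h2
    have e : (Sum.elim (fun i => α * (Sum.elim ![z (Sum.inl 0) / α, 1 + c * (z (Sum.inl 0) / α)]
      ![z (Sum.inr 0) / β, 1 + d * (z (Sum.inr 0) / β)] : Fin 2 ⊕ Fin 2 → ℂ) (Sum.inl i))
      (fun i => β * (Sum.elim ![z (Sum.inl 0) / α, 1 + c * (z (Sum.inl 0) / α)]
      ![z (Sum.inr 0) / β, 1 + d * (z (Sum.inr 0) / β)] : Fin 2 ⊕ Fin 2 → ℂ) (Sum.inr i))) = z := by
      ext i
      rcases i with i | i <;> fin_cases i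
      · simp; field_simp
      · simp; field_simp; rw [hα']; ring
      · simp; field_simp
      · simp; field_simp; rw [hβ']; ring
    rw [e] at h2
    rw [h2]; simp
  exact mul_ne_zero h0 (mul_ne_zero (hl _ Sum.inl_injective c) (hl _ Sum.inr_injective d)) key

lemma exists_c (Z : Finset ProjLine) : ∃ c : ℂ, ∀ P ∈ Z, P.rep 1 - c * P.rep 0 ≠ 0 := by
  classical
  obtain ⟨c, hc⟩ := Infinite.exists_notMem_finset (Z.image fun P => P.rep 1 / P.rep 0)
  refine ⟨c, fun P hP h => hc ?_⟩
  have h0 : P.rep 0 ≠ 0 := by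
    intro h0
    rw [h0] at h
    exact rep_ne P ⟨h0, by simpa using h⟩
  refine Finset.mem_image.2 ⟨P, hP, ?_⟩
  field_simp
  linear_combination h

lemma eq_of_cross {P Q : ProjLine} (h : P.rep 0 * Q.rep 1 = Q.rep 0 * P.rep 1) : P = Q := by
  rw [← P.mk_rep, ← Q.mk_rep, Projectivization.mk_eq_mk_iff']
  by_cases h0 : Q.rep 0 = 0
  · have h1 : Q.rep 1 ≠ 0 := fun h1 => rep_ne Q ⟨h0, h1⟩
    refine ⟨P.rep 1 / Q.rep 1, ?_⟩
    have : P.rep 0 = 0 := by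
      rw [h0, zero_mul] at h
      exact (mul_eq_zero.1 h).resolve_right h1
    ext i; fin_cases i
    · simp [h0, this]
    · simp [h1]
  · refine ⟨P.rep 0 / Q.rep 0, ?_⟩
    ext i; fin_cases i
    · simp [h0]
    · simp; field_simp; linear_combination h

/-- affine coordinate -/
def aff (c : ℂ) (P : ProjLine) : ℂ := P.rep 0 / (P.rep 1 - c * P.rep 0)

lemma aff_inj (Z : Finset ProjLine) (c : ℂ) (hc : ∀ P ∈ Z, P.rep 1 - c * P.rep 0 ≠ 0) :
    Set.InjOn (aff c) Z := by
  intro P hP Q hQ h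
  unfold aff at h
  rw [div_eq_div_iff (hc P hP) (hc Q hQ)] at h
  exact eq_of_cross (by linear_combination h)

lemma psi_theta (c d : ℂ) (P Q : ProjLine) (hP : P.rep 1 - c * P.rep 0 ≠ 0)
    (hQ : Q.rep 1 - d * Q.rep 0 ≠ 0) (m : ℕ) (F : R4) (hF : F ∈ pointIdeal (P, Q) ^ m) :
    Polynomial.X ^ m ∣ psi (aff c P) (aff d Q) (theta c d F) := by
  have hle : pointIdeal (P, Q) ≤ Ideal.comap ((psi (aff c P) (aff d Q)).comp (theta c d))
      (Ideal.span {Polynomial.X}) := by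
    unfold pointIdeal
    rw [Ideal.span_le]
    have e1 : (Polynomial.C (Polynomial.C (P.rep 0)) : Polynomial (Polynomial ℂ)) =
        Polynomial.C (Polynomial.C (aff c P)) * (Polynomial.C (Polynomial.C (P.rep 1)) -
          Polynomial.C (Polynomial.C c) * Polynomial.C (Polynomial.C (P.rep 0))) := by
      simp only [← Polynomial.C_mul, ← Polynomial.C_sub]
      rw [aff, div_mul_cancel₀ _ hP]
    have e2 : (Polynomial.C (Polynomial.C (Q.rep 0)) : Polynomial (Polynomial ℂ)) =
        Polynomial.C (Polynomial.C (aff d Q)) * (Polynomial.C (Polynomial.C (Q.rep 1)) -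
          Polynomial.C (Polynomial.C d) * Polynomial.C (Polynomial.C (Q.rep 0))) := by
      simp only [← Polynomial.C_mul, ← Polynomial.C_sub]
      rw [aff, div_mul_cancel₀ _ hQ]
    rintro x (rfl | rfl)
    · simp only [SetLike.mem_coe, Ideal.mem_comap, Ideal.mem_span_singleton]
      refine ⟨Polynomial.C Polynomial.X * (Polynomial.C (Polynomial.C (P.rep 1)) -
          Polynomial.C (Polynomial.C c) * Polynomial.C (Polynomial.C (P.rep 0))), ?_⟩
      simp [psi, theta]
      linear_combination -e1
    · simp only [SetLike.mem_coe, Ideal.mem_comap, Ideal.mem_span_singleton]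
      refine ⟨(Polynomial.C (Polynomial.C (Q.rep 1)) -
          Polynomial.C (Polynomial.C d) * Polynomial.C (Polynomial.C (Q.rep 0))), ?_⟩
      simp [psi, theta]
      linear_combination -e2
  have h1 := Ideal.pow_right_mono hle m hF
  have h2 := Ideal.le_comap_pow _ m h1
  rw [Ideal.mem_comap, Ideal.span_singleton_pow, Ideal.mem_span_singleton] at h2
  exact h2

lemma lower (ZV ZH : Finset ProjLine) (m p q : ℕ) (F : R4) (hF : F ∈ symbPow (ZV ×ˢ ZH) m)
    (h0 : F ≠ 0) (hB : IsBiForm F p q) :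
    ∃ s ≤ m, s * ZV.card ≤ p ∧ (m - s) * ZH.card ≤ q := by
  classical
  obtain ⟨c, hc⟩ := exists_c ZV
  obtain ⟨d, hd⟩ := exists_c ZH
  rw [← Finset.card_image_of_injOn (aff_inj ZV c hc),
    ← Finset.card_image_of_injOn (aff_inj ZH d hd)]
  refine affine _ _ m p q (theta c d F) (theta_ne c d hB h0) (theta_bnd c d hB) ?_
  simp only [Finset.mem_image]
  rintro _ ⟨P, hP, rfl⟩ _ ⟨Q, hQ, rfl⟩
  refine psi_theta c d P Q (hc P hP) (hd Q hQ) m F ?_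
  simp only [symbPow, Ideal.mem_iInf] at hF
  exact hF (P, Q) (Finset.mem_product.2 ⟨hP, hQ⟩)

/-- For the radical ideal `I` of an `(a,b)`-grid `Z = Z_V × Z_H` of points in `ℙ¹ × ℙ¹`
(`a, b ≥ 1`), one has `α*(I^{(m)}) = max{a_m, b_m}` for all `m ≥ 1`, where `(a_m,b_m)` is
the sequence associated to `(a,b)`. -/
theorem alphaStar_symbPow_grid (a b : ℕ) (ha : 1 ≤ a) (hb : 1 ≤ b)
    (ZV ZH : Finset ProjLine) (hV : ZV.card = a) (hH : ZH.card = b)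
    (m : ℕ) (hm : 1 ≤ m) :
    alphaStar (symbPow (ZV ×ˢ ZH) m) = max (gridSeq a b m).1 (gridSeq a b m).2 := by
  subst hV hH
  obtain ⟨s, hs, h, h1, h2⟩ := grid_inv ZV.card ZH.card m
  rw [h]
  dsimp only
  have hu := upper ZV ZH m s _ hs (le_max_left _ _) (le_max_right _ _)
  refine le_antisymm (Nat.sInf_le hu) (le_csInf ⟨_, hu⟩ ?_)
  rintro t ⟨F, hF, h0, hB⟩
  obtain ⟨r, hr, h3, h4⟩ := lower ZV ZH m t t F hF h0 hB
  rcases lt_trichotomy r s with hrs | rfl | hrs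
  · have h5 : (m - s + 1) * ZH.card ≤ (m - r) * ZH.card := Nat.mul_le_mul_right _ (by omega)
    rw [add_mul, one_mul] at h5
    exact max_le (by omega) (by omega)
  · exact max_le h3 h4
  · have h5 : (s + 1) * ZV.card ≤ r * ZV.card := Nat.mul_le_mul_right _ (by omega)
    rw [add_mul, one_mul] at h5
    exact max_le (by omega) (by omega)
end
end

section
/- There is no finite set Z of distinct points of X = ℙ¹×ℙ¹ such that, for the radical ideal I of Z, the equalities α*(I^{(m+2)}) = α*(I^{(m+1)}) = α*(I^{(m)}) hold for some positive integer m. Equivalently, for every such Z and every m ≥ 1 one has α*(I^{(m+2)}) > α*(I^{(m)}). -/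
open MvPolynomial

noncomputable section

/-- The weight of a monomial, computed explicitly. -/
lemma weight_bi (d : Fin 2 ⊕ Fin 2 →₀ ℕ) : Finsupp.weight biWeight d =
    (d (Sum.inl 0) + d (Sum.inl 1), d (Sum.inr 0) + d (Sum.inr 1)) := by
  rw [Finsupp.weight_apply, Finsupp.sum_fintype _ _ (by simp)]
  ext <;> simp [biWeight, Fin.sum_univ_two]

lemma weight_x (d : Fin 2 ⊕ Fin 2 →₀ ℕ) :
    Finsupp.weight (Sum.elim (fun _ => 1) (fun _ => 0) : Fin 2 ⊕ Fin 2 → ℕ) d =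
    d (Sum.inl 0) + d (Sum.inl 1) := by
  rw [Finsupp.weight_apply, Finsupp.sum_fintype _ _ (by simp)]
  simp [Fin.sum_univ_two]

lemma weight_y (d : Fin 2 ⊕ Fin 2 →₀ ℕ) :
    Finsupp.weight (Sum.elim (fun _ => 0) (fun _ => 1) : Fin 2 ⊕ Fin 2 → ℕ) d =
    d (Sum.inr 0) + d (Sum.inr 1) := by
  rw [Finsupp.weight_apply, Finsupp.sum_fintype _ _ (by simp)]
  simp [Fin.sum_univ_two]

lemma eq_zero_of_pderiv_x {F : R4} {p q : ℕ} (hF : IsBiForm F p q) (hp : p ≠ 0)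
    (h : ∀ i, pderiv (Sum.inl i) F = 0) : F = 0 := by
  have h1 : IsWeightedHomogeneous
      (Sum.elim (fun _ => 1) (fun _ => 0) : Fin 2 ⊕ Fin 2 → ℕ) F p := by
    intro d hd
    have := hF hd
    rw [weight_bi] at this
    rw [weight_x]
    exact congrArg Prod.fst this
  have h2 := h1.sum_weight_X_mul_pderiv
  simpa [h, hp] using h2.symm

lemma eq_zero_of_pderiv_y {F : R4} {p q : ℕ} (hF : IsBiForm F p q) (hq : q ≠ 0)
    (h : ∀ i, pderiv (Sum.inr i) F = 0) : F = 0 := by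
  have h1 : IsWeightedHomogeneous
      (Sum.elim (fun _ => 0) (fun _ => 1) : Fin 2 ⊕ Fin 2 → ℕ) F q := by
    intro d hd
    have := hF hd
    rw [weight_bi] at this
    rw [weight_y]
    exact congrArg Prod.snd this
  have h2 := h1.sum_weight_X_mul_pderiv
  simpa [h, hq] using h2.symm

lemma pderiv_mem_pow (J : Ideal R4) (i : Fin 2 ⊕ Fin 2) (n : ℕ) :
    ∀ F ∈ J ^ (n + 1), pderiv i F ∈ J ^ n := by
  induction n with
  | zero => intro F _; simp
  | succ n ih =>
    intro F hF
    rw [pow_succ' J (n + 1)] at hF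
    refine Submodule.mul_induction_on hF ?_ ?_
    · intro a ha b hb
      rw [Derivation.leibniz, smul_eq_mul, smul_eq_mul]
      refine Ideal.add_mem _ ?_ (Ideal.mul_mem_right _ _ hb)
      rw [pow_succ']
      exact Ideal.mul_mem_mul ha (ih b hb)
    · intro a b ha hb
      rw [map_add]
      exact Ideal.add_mem _ ha hb

lemma pderiv_mem_symbPow (Z : Finset (ProjLine × ProjLine)) (i : Fin 2 ⊕ Fin 2) (n : ℕ)
    {F : R4} (hF : F ∈ symbPow Z (n + 1)) : pderiv i F ∈ symbPow Z n := by
  simp only [symbPow, Submodule.mem_iInf] at hF ⊢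
  exact fun P hP => pderiv_mem_pow _ _ _ _ (hF P hP)

lemma linForm_ne_zero (v : Fin 2 → ℂ) (hv : v ≠ 0) (f : Fin 2 → Fin 2 ⊕ Fin 2)
    (hf : f 0 ≠ f 1) : (C (v 1) * X (f 0) - C (v 0) * X (f 1) : R4) ≠ 0 := by
  intro h
  apply hv
  have h0 := congrArg (eval (fun j => if j = f 0 then (1 : ℂ) else 0)) h
  have h1 := congrArg (eval (fun j => if j = f 1 then (1 : ℂ) else 0)) h
  simp [hf, hf.symm] at h0 h1
  ext j
  fin_cases j <;> simp [h0, h1]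

/-- The symbolic powers contain nonzero forms of some bidegree `(t,t)`. -/
lemma exists_form (Z : Finset (ProjLine × ProjLine)) (m : ℕ) :
    ∃ t : ℕ, ∃ F ∈ symbPow Z m, F ≠ 0 ∧ IsBiForm F t t := by
  let L : ProjLine × ProjLine → R4 := fun P =>
    ((C (P.1.rep 1) * X (Sum.inl 0) - C (P.1.rep 0) * X (Sum.inl 1)) *
      (C (P.2.rep 1) * X (Sum.inr 0) - C (P.2.rep 0) * X (Sum.inr 1))) ^ m
  refine ⟨∑ P ∈ Z, m, ∏ P ∈ Z, L P, ?_, ?_, ?_⟩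
  · simp only [symbPow, Submodule.mem_iInf]
    intro P hP
    refine Ideal.mem_of_dvd _ (Finset.dvd_prod_of_mem L hP) ?_
    refine Ideal.pow_mem_pow (Ideal.mul_mem_right _ _ (Ideal.subset_span (by simp))) _
  · rw [Finset.prod_ne_zero_iff]
    intro P _
    refine pow_ne_zero _ (mul_ne_zero ?_ ?_)
    · exact linForm_ne_zero _ P.1.rep_nonzero Sum.inl (by simp)
    · exact linForm_ne_zero _ P.2.rep_nonzero Sum.inr (by simp)
  · have h := IsWeightedHomogeneous.prod (w := biWeight) Z L (fun _ => (m, m)) ?_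
    · unfold IsBiForm
      convert h using 1
      ext <;> simp
    · intro P _
      have hx := ((isWeightedHomogeneous_X ℂ biWeight (Sum.inl 0)).C_mul (P.1.rep 1)).sub
        ((isWeightedHomogeneous_X ℂ biWeight (Sum.inl 1)).C_mul (P.1.rep 0))
      have hy := ((isWeightedHomogeneous_X ℂ biWeight (Sum.inr 0)).C_mul (P.2.rep 1)).sub
        ((isWeightedHomogeneous_X ℂ biWeight (Sum.inr 1)).C_mul (P.2.rep 0))
      have := (hx.mul hy).pow m
      have e : m • (biWeight (Sum.inl 0) + biWeight (Sum.inr 0)) = (m, m) := by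
        ext <;> simp [biWeight]
      rw [← e]
      exact this

lemma degree_ne_zero {Z : Finset (ProjLine × ProjLine)} (hZ : Z.Nonempty) {n t : ℕ} {F : R4}
    (hF : F ∈ symbPow Z (n + 1)) (h0 : F ≠ 0) (hb : IsBiForm F t t) : t ≠ 0 := by
  rintro rfl
  obtain ⟨P, hP⟩ := hZ
  simp only [symbPow, Submodule.mem_iInf] at hF
  have h1 : F ∈ pointIdeal P := Ideal.pow_le_self (Nat.succ_ne_zero n) (hF P hP)
  have h2 : pointIdeal P ≤ RingHom.ker (constantCoeff : R4 →+* ℂ) := by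
    rw [pointIdeal, Ideal.span_le]
    rintro _ (rfl | rfl) <;> simp [RingHom.mem_ker]
  have h3 : coeff 0 F = 0 := h2 h1
  apply h0
  ext d
  by_contra hd
  have hw := hb hd
  rw [weight_bi] at hw
  simp only [Prod.mk.injEq, Nat.add_eq_zero_iff] at hw
  have : d = 0 := by
    ext j
    rcases j with j | j <;> fin_cases j <;> simp [hw]
  subst this
  exact hd (by simpa using h3)

/-- There is no (nonempty) finite set `Z` of distinct points of `ℙ¹ × ℙ¹` for whose radical
ideal `I` the equalities `α*(I^{(m+2)}) = α*(I^{(m+1)}) = α*(I^{(m)})` hold for some `m ≥ 1`;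
equivalently, `α*(I^{(m+2)}) > α*(I^{(m)})` for every such `Z` and every `m ≥ 1`. -/
theorem alphaStar_no_two_consecutive_equalities (Z : Finset (ProjLine × ProjLine))
    (hZ : Z.Nonempty) (m : ℕ) (hm : 1 ≤ m) :
    alphaStar (symbPow Z m) < alphaStar (symbPow Z (m + 2)) := by
  obtain ⟨F, hF, h0, hb⟩ : ∃ F ∈ symbPow Z (m + 2), F ≠ 0 ∧
      IsBiForm F (alphaStar (symbPow Z (m + 2))) (alphaStar (symbPow Z (m + 2))) :=
    Nat.sInf_mem (exists_form Z (m + 2))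
  have ht := degree_ne_zero hZ hF h0 hb
  obtain ⟨s, hs⟩ := Nat.exists_eq_succ_of_ne_zero ht
  rw [hs] at hb ⊢
  obtain ⟨i, hi⟩ : ∃ i, pderiv (Sum.inl i) F ≠ 0 := by
    by_contra! h
    exact h0 (eq_zero_of_pderiv_x hb (Nat.succ_ne_zero s) h)
  have hb1 : IsBiForm (pderiv (Sum.inl i) F) s (s + 1) :=
    IsWeightedHomogeneous.pderiv hb (by simp [biWeight])
  obtain ⟨j, hj⟩ : ∃ j, pderiv (Sum.inr j) (pderiv (Sum.inl i) F) ≠ 0 := by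
    by_contra! h
    exact hi (eq_zero_of_pderiv_y hb1 (Nat.succ_ne_zero s) h)
  have hb2 : IsBiForm (pderiv (Sum.inr j) (pderiv (Sum.inl i) F)) s s :=
    IsWeightedHomogeneous.pderiv hb1 (by simp [biWeight])
  refine Nat.lt_succ_of_le (Nat.sInf_le ⟨_, ?_, hj, hb2⟩)
  exact pderiv_mem_symbPow Z _ _ (pderiv_mem_symbPow Z _ _ hF)
end
end

section
/- Let I be the radical ideal of an (a,b)-grid Z in X = ℙ¹×ℙ¹ with a, b ≥ 1. Then the jump function f(Z;m) = α*(I^{(m)}) − α*(I^{(m−1)}) takes the value 0 for infinitely many m and takes the value min{a,b} for infinitely many m. -/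
open MvPolynomial

noncomputable section

/-- The jump function `f(Z;m) = α*(I^{(m)}) - α*(I^{(m-1)})` for `m ≥ 1`
(note `symbPow Z 0 = ⊤`, so the convention `α*(I^{(0)}) = 0` holds automatically). -/
def jumpFun (Z : Finset (ProjLine × ProjLine)) (m : ℕ) : ℤ :=
  (alphaStar (symbPow Z m) : ℤ) - (alphaStar (symbPow Z (m - 1)) : ℤ)



theorem coeff_dvd_of_mem_pow {A : Type*} [CommRing A] (h : A) (m : ℕ) :
    ∀ G ∈ (Ideal.span {(Polynomial.X : Polynomial A), Polynomial.C h}) ^ m,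
      ∀ j, h ^ (m - j) ∣ G.coeff j := by
  have key : ∀ (m n : ℕ) (F G : Polynomial A), (∀ j, h ^ (m - j) ∣ F.coeff j) →
      (∀ j, h ^ (n - j) ∣ G.coeff j) → ∀ j, h ^ (m + n - j) ∣ (F * G).coeff j := by
    intro m n F G hF hG j
    rw [Polynomial.coeff_mul]
    refine Finset.dvd_sum fun x hx => ?_
    rw [Finset.HasAntidiagonal.mem_antidiagonal] at hx
    refine dvd_trans (pow_dvd_pow h (?_ : _ ≤ (m - x.1) + (n - x.2))) ?_
    · omega
    · rw [pow_add]
      exact mul_dvd_mul (hF _) (hG _)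
  induction m with
  | zero => intro G _ j; simp
  | succ m ih =>
    intro G hG
    rw [pow_succ] at hG
    refine Submodule.mul_induction_on hG ?_ ?_
    · intro F hF H hH
      refine key m 1 F H (ih F hF) ?_
      obtain ⟨α, β, rfl⟩ := Ideal.mem_span_pair.1 hH
      intro j
      rcases j with _ | j
      · simp
      · simp
    · intro F H hF hH j
      rw [Polynomial.coeff_add]
      exact dvd_add (hF j) (hH j)

theorem sum_rootMultiplicity_le {A : Type*} [CommRing A] [IsDomain A] (G : Polynomial A)
    {ι : Type*} (S : Finset ι) (σ : ι → A) (hσ : Set.InjOn σ S) :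
    ∑ v ∈ S, G.rootMultiplicity (σ v) ≤ G.natDegree := by
  classical
  refine le_trans ?_ (Polynomial.card_roots' G)
  rw [← Finset.sum_image (f := fun x => G.rootMultiplicity x) hσ]
  simp_rw [← Polynomial.count_roots]
  rw [← Multiset.toFinset_sum_count_eq]
  refine Finset.sum_le_sum_of_ne_zero ?_
  intro x _ hx
  exact Multiset.mem_toFinset.2 (Multiset.count_ne_zero.1 hx)

theorem taylor_coeff_rootMultiplicity_ne_zero {A : Type*} [CommRing A] [IsDomain A]
    (G : Polynomial A) (hG : G ≠ 0) (σ : A) :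
    (Polynomial.taylor σ G).coeff (G.rootMultiplicity σ) ≠ 0 := by
  obtain ⟨H, hH, hnd⟩ := Polynomial.exists_eq_pow_rootMultiplicity_mul_and_not_dvd G hG σ
  have h1 : Polynomial.taylor σ G =
      Polynomial.X ^ (G.rootMultiplicity σ) * Polynomial.taylor σ H := by
    conv_lhs => rw [hH]
    rw [Polynomial.taylor_mul, Polynomial.taylor_pow]
    simp
  rw [h1, Polynomial.coeff_X_pow_mul', if_pos le_rfl, Nat.sub_self, Polynomial.taylor_coeff_zero]
  rwa [Polynomial.dvd_iff_isRoot] at hnd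

theorem natDegree_taylor_coeff_le {k : Type*} [Field k] (G : Polynomial (Polynomial k)) (q : ℕ)
    (hG : ∀ j, (G.coeff j).natDegree ≤ q) (s : k) (i : ℕ) :
    ((Polynomial.taylor (Polynomial.C s) G).coeff i).natDegree ≤ q := by
  rw [Polynomial.taylor_coeff, Polynomial.eval_eq_sum_range]
  refine Polynomial.natDegree_sum_le_of_forall_le _ _ fun j _ => ?_
  rw [Polynomial.hasseDeriv_coeff, ← Polynomial.C_pow]
  refine (Polynomial.natDegree_mul_C_le _ _).trans ?_
  rw [← Polynomial.C_eq_natCast]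
  exact (Polynomial.natDegree_C_mul_le _ _).trans (hG _)

theorem affine_bound {k : Type*} [Field k] (G : Polynomial (Polynomial k)) (hG0 : G ≠ 0)
    (p q m : ℕ) (hp : G.natDegree ≤ p) (hq : ∀ j, (G.coeff j).natDegree ≤ q)
    {ι κ : Type*} (S : Finset ι) (T : Finset κ) (hS : S.Nonempty) (σ : ι → k) (τ : κ → k)
    (hσ : Set.InjOn σ S) (hτ : Set.InjOn τ T)
    (hmem : ∀ v ∈ S, ∀ w ∈ T, G ∈ (Ideal.span
      {(Polynomial.X - Polynomial.C (Polynomial.C (σ v)) : Polynomial (Polynomial k)),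
        Polynomial.C (Polynomial.X - Polynomial.C (τ w))}) ^ m) :
    ∃ i, S.card * i ≤ p ∧ T.card * (m - i) ≤ q := by
  obtain ⟨v, hv, hmin⟩ := Finset.exists_min_image S
    (fun v => G.rootMultiplicity (Polynomial.C (σ v))) hS
  refine ⟨G.rootMultiplicity (Polynomial.C (σ v)), ?_, ?_⟩
  · refine le_trans ?_ hp
    refine le_trans ?_ (sum_rootMultiplicity_le G S (fun v => Polynomial.C (σ v)) ?_)
    · rw [← smul_eq_mul]
      exact Finset.card_nsmul_le_sum _ _ _ hmin
    · intro x hx y hy hxy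
      exact hσ hx hy (Polynomial.C_injective hxy)
  · set i := G.rootMultiplicity (Polynomial.C (σ v)) with hi
    have hne := taylor_coeff_rootMultiplicity_ne_zero G hG0 (Polynomial.C (σ v))
    rw [← hi] at hne
    refine le_trans ?_ (natDegree_taylor_coeff_le G q hq (σ v) i)
    refine le_trans ?_ (sum_rootMultiplicity_le _ T τ hτ)
    rw [← smul_eq_mul]
    refine Finset.card_nsmul_le_sum _ _ _ fun w hw => ?_
    rw [Polynomial.le_rootMultiplicity_iff hne]
    refine coeff_dvd_of_mem_pow _ m _ ?_ i
    have h1 := Ideal.mem_map_of_mem (Polynomial.taylorAlgHom (Polynomial.C (σ v))) (hmem v hv w hw)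
    rw [Ideal.map_pow, Ideal.map_span, Set.image_pair] at h1
    simpa using h1

/-- Affine chart. -/
def chart (c d : ℂ) : R4 →ₐ[ℂ] Polynomial (Polynomial ℂ) :=
  MvPolynomial.aeval (Sum.elim
    ![1 + Polynomial.C (Polynomial.C c) * Polynomial.X, Polynomial.X]
    ![Polynomial.C (1 + Polynomial.C d * Polynomial.X), Polynomial.C Polynomial.X])

theorem biform_weight {F : R4} {p q : ℕ} (hF : IsBiForm F p q) {s : Fin 2 ⊕ Fin 2 →₀ ℕ}
    (hs : MvPolynomial.coeff s F ≠ 0) :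
    s (Sum.inl 0) + s (Sum.inl 1) = p ∧ s (Sum.inr 0) + s (Sum.inr 1) = q := by
  have h := hF hs
  rw [Finsupp.weight_apply, Finsupp.sum_fintype _ _ (by simp)] at h
  simpa [biWeight, Fin.sum_univ_two, Prod.ext_iff] using h

theorem chart_monomial (c d : ℂ) (s : Fin 2 ⊕ Fin 2 →₀ ℕ) (r : ℂ) :
    chart c d (MvPolynomial.monomial s r) =
      ((1 + Polynomial.C (Polynomial.C c) * Polynomial.X) ^ s (Sum.inl 0) *
        Polynomial.X ^ s (Sum.inl 1)) *
      Polynomial.C (Polynomial.C r * ((1 + Polynomial.C d * Polynomial.X) ^ s (Sum.inr 0) *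
        Polynomial.X ^ s (Sum.inr 1))) := by
  rw [chart, MvPolynomial.aeval_monomial, Finsupp.prod_fintype _ _ (by simp)]
  simp [Fin.prod_univ_two, Polynomial.algebraMap_apply]
  ring

theorem chart_natDegree {F : R4} {p q : ℕ} (hF : IsBiForm F p q) (c d : ℂ) :
    (chart c d F).natDegree ≤ p := by
  rw [F.as_sum, map_sum]
  refine Polynomial.natDegree_sum_le_of_forall_le _ _ fun s hs => ?_
  obtain ⟨h1, h2⟩ := biform_weight hF (MvPolynomial.mem_support_iff.1 hs)
  rw [chart_monomial]
  refine (Polynomial.natDegree_mul_C_le _ _).trans ?_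
  rw [← h1]
  compute_degree

theorem chart_coeff_natDegree {F : R4} {p q : ℕ} (hF : IsBiForm F p q) (c d : ℂ) (j : ℕ) :
    ((chart c d F).coeff j).natDegree ≤ q := by
  rw [F.as_sum, map_sum, Polynomial.finsetSum_coeff]
  refine Polynomial.natDegree_sum_le_of_forall_le _ _ fun s hs => ?_
  obtain ⟨h1, h2⟩ := biform_weight hF (MvPolynomial.mem_support_iff.1 hs)
  rw [chart_monomial, Polynomial.coeff_mul_C]
  have h3 : ((1 + Polynomial.C (Polynomial.C c) * Polynomial.X) ^ s (Sum.inl 0) *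
        Polynomial.X ^ s (Sum.inl 1) : Polynomial (Polynomial ℂ)) =
      Polynomial.mapRingHom Polynomial.C ((1 + Polynomial.C c * Polynomial.X) ^ s (Sum.inl 0) *
        Polynomial.X ^ s (Sum.inl 1)) := by simp
  rw [h3, Polynomial.coe_mapRingHom, Polynomial.coeff_map]
  refine (Polynomial.natDegree_C_mul_le _ _).trans ?_
  refine (Polynomial.natDegree_C_mul_le _ _).trans ?_
  rw [← h2]
  compute_degree

theorem biform_eval_smul {F : R4} {p q : ℕ} (hF : IsBiForm F p q) (x : Fin 2 ⊕ Fin 2 → ℂ)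
    (l n : ℂ) :
    MvPolynomial.eval (Sum.elim (fun i => l * x (Sum.inl i)) (fun i => n * x (Sum.inr i))) F =
      l ^ p * n ^ q * MvPolynomial.eval x F := by
  rw [MvPolynomial.eval_eq', MvPolynomial.eval_eq', Finset.mul_sum]
  refine Finset.sum_congr rfl fun s hs => ?_
  obtain ⟨h1, h2⟩ := biform_weight hF (MvPolynomial.mem_support_iff.1 hs)
  simp only [Fintype.prod_sum_type, Fin.prod_univ_two, Sum.elim_inl, Sum.elim_inr, mul_pow]
  rw [← h1, ← h2]
  ring

theorem chart_eval (c d s r : ℂ) (F : R4) :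
    ((chart c d F).eval (Polynomial.C s)).eval r =
      MvPolynomial.eval (Sum.elim ![1 + c * s, s] ![1 + d * r, r]) F := by
  have h : ((Polynomial.evalRingHom r).comp (Polynomial.evalRingHom (Polynomial.C s))).comp
      (chart c d : R4 →+* _) = MvPolynomial.eval (Sum.elim ![1 + c * s, s] ![1 + d * r, r]) := by
    apply MvPolynomial.ringHom_ext
    · intro z
      simp [chart, Polynomial.algebraMap_apply]
    · rintro (i | i) <;> fin_cases i <;> simp [chart]
  exact congrArg (fun f => f F) h

theorem chart_ne_zero {F : R4} {p q : ℕ} (hF : IsBiForm F p q) (hF0 : F ≠ 0) (c d : ℂ) :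
    chart c d F ≠ 0 := by
  intro h0
  have hz : F * ((MvPolynomial.X (Sum.inl 0) - MvPolynomial.C c * MvPolynomial.X (Sum.inl 1)) *
      (MvPolynomial.X (Sum.inr 0) - MvPolynomial.C d * MvPolynomial.X (Sum.inr 1))) = 0 := by
    apply MvPolynomial.funext
    intro x
    simp only [map_mul, map_sub, MvPolynomial.eval_X, MvPolynomial.eval_C, map_zero]
    by_cases h1 : x (Sum.inl 0) - c * x (Sum.inl 1) = 0
    · simp [h1]
    by_cases h2 : x (Sum.inr 0) - d * x (Sum.inr 1) = 0
    · simp [h2]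
    have h3 := chart_eval c d (x (Sum.inl 1) / (x (Sum.inl 0) - c * x (Sum.inl 1)))
      (x (Sum.inr 1) / (x (Sum.inr 0) - d * x (Sum.inr 1))) F
    rw [h0] at h3
    have h4 := biform_eval_smul hF
      (Sum.elim ![1 + c * (x (Sum.inl 1) / (x (Sum.inl 0) - c * x (Sum.inl 1))),
        (x (Sum.inl 1) / (x (Sum.inl 0) - c * x (Sum.inl 1)))]
      ![1 + d * (x (Sum.inr 1) / (x (Sum.inr 0) - d * x (Sum.inr 1))),
        (x (Sum.inr 1) / (x (Sum.inr 0) - d * x (Sum.inr 1)))])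
      (x (Sum.inl 0) - c * x (Sum.inl 1)) (x (Sum.inr 0) - d * x (Sum.inr 1))
    rw [← h3] at h4
    have h5 : (Sum.elim
      (fun i => (x (Sum.inl 0) - c * x (Sum.inl 1)) * (Sum.elim
        ![1 + c * (x (Sum.inl 1) / (x (Sum.inl 0) - c * x (Sum.inl 1))),
        (x (Sum.inl 1) / (x (Sum.inl 0) - c * x (Sum.inl 1)))]
        ![1 + d * (x (Sum.inr 1) / (x (Sum.inr 0) - d * x (Sum.inr 1))),
        (x (Sum.inr 1) / (x (Sum.inr 0) - d * x (Sum.inr 1)))] : Fin 2 ⊕ Fin 2 → ℂ) (Sum.inl i))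
      (fun i => (x (Sum.inr 0) - d * x (Sum.inr 1)) * (Sum.elim
        ![1 + c * (x (Sum.inl 1) / (x (Sum.inl 0) - c * x (Sum.inl 1))),
        (x (Sum.inl 1) / (x (Sum.inl 0) - c * x (Sum.inl 1)))]
        ![1 + d * (x (Sum.inr 1) / (x (Sum.inr 0) - d * x (Sum.inr 1))),
        (x (Sum.inr 1) / (x (Sum.inr 0) - d * x (Sum.inr 1)))] : Fin 2 ⊕ Fin 2 → ℂ) (Sum.inr i))
        : Fin 2 ⊕ Fin 2 → ℂ) = x := by
      funext i
      rcases i with i | i <;> fin_cases i <;> simp <;> field_simp <;> ring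
    rw [h5] at h4
    rw [h4]
    simp
  have hx : ∀ (f : Fin 2 → Fin 2 ⊕ Fin 2) (e : ℂ), f 0 ≠ f 1 →
      (MvPolynomial.X (f 0) - MvPolynomial.C e * MvPolynomial.X (f 1) : R4) ≠ 0 := by
    intro f e hf h
    have := congrArg (MvPolynomial.eval (fun i => if i = f 0 then (1 : ℂ) else 0)) h
    simp [hf.symm] at this
  rcases mul_eq_zero.1 hz with h | h
  · exact hF0 h
  rcases mul_eq_zero.1 h with h | h
  · exact hx Sum.inl c (by simp) h
  · exact hx Sum.inr d (by simp) h

theorem exists_good (S : Finset ProjLine) : ∃ c : ℂ, ∀ v ∈ S, v.rep 0 - c * v.rep 1 ≠ 0 := by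
  classical
  obtain ⟨c, hc⟩ := Infinite.exists_notMem_finset (S.image fun v => v.rep 0 / v.rep 1)
  refine ⟨c, fun v hv h => ?_⟩
  by_cases h1 : v.rep 1 = 0
  · apply v.rep_nonzero
    funext i
    fin_cases i
    · simpa [h1] using h
    · simpa using h1
  · apply hc
    refine Finset.mem_image.2 ⟨v, hv, ?_⟩
    rw [div_eq_iff h1]
    exact sub_eq_zero.1 h

theorem good_injOn (S : Finset ProjLine) (c : ℂ) (hc : ∀ v ∈ S, v.rep 0 - c * v.rep 1 ≠ 0) :
    Set.InjOn (fun v : ProjLine => v.rep 1 / (v.rep 0 - c * v.rep 1)) S := by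
  intro v hv w hw h
  have h1 := hc v hv
  have h2 := hc w hw
  simp only at h
  rw [div_eq_div_iff h1 h2] at h
  rw [← v.mk_rep, ← w.mk_rep, Projectivization.mk_eq_mk_iff']
  refine ⟨(v.rep 0 - c * v.rep 1) / (w.rep 0 - c * w.rep 1), ?_⟩
  funext i
  fin_cases i
  · simp
    field_simp
    linear_combination (-c) * h
  · simp
    field_simp
    linear_combination -h

theorem lower_bound (ZV ZH : Finset ProjLine) (hV : ZV.Nonempty) (m p q : ℕ) (F : R4)
    (hF0 : F ≠ 0) (hF : IsBiForm F p q) (hmem : F ∈ symbPow (ZV ×ˢ ZH) m) :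
    ∃ i, ZV.card * i ≤ p ∧ ZH.card * (m - i) ≤ q := by
  obtain ⟨c, hc⟩ := exists_good ZV
  obtain ⟨d, hd⟩ := exists_good ZH
  refine affine_bound (chart c d F) (chart_ne_zero hF hF0 c d) p q m (chart_natDegree hF c d)
    (chart_coeff_natDegree hF c d) ZV ZH hV _ _ (good_injOn ZV c hc) (good_injOn ZH d hd) ?_
  intro v hv w hw
  have h1 : F ∈ pointIdeal (v, w) ^ m := by
    simp only [symbPow, Submodule.mem_iInf] at hmem
    exact hmem (v, w) (Finset.mem_product.2 ⟨hv, hw⟩)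
  have h2 := Ideal.mem_map_of_mem (chart c d) h1
  rw [Ideal.map_pow] at h2
  refine Ideal.pow_right_mono ?_ m h2
  rw [pointIdeal, Ideal.map_span, Ideal.span_le, Set.image_pair]
  have hv' := hc v hv
  have hw' := hd w hw
  rintro x (rfl | rfl)
  · refine Ideal.mem_span_pair.2 ⟨-Polynomial.C (Polynomial.C (v.rep 0 - c * v.rep 1)), 0, ?_⟩
    have : Polynomial.C (Polynomial.C (v.rep 0 - c * v.rep 1)) *
        Polynomial.C (Polynomial.C (v.rep 1 / (v.rep 0 - c * v.rep 1))) =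
        (Polynomial.C (Polynomial.C (v.rep 1)) : Polynomial (Polynomial ℂ)) := by
      rw [← Polynomial.C_mul, ← Polynomial.C_mul, mul_div_cancel₀ _ hv']
    simp only [chart, map_sub, map_mul, MvPolynomial.aeval_X, MvPolynomial.aeval_C,
      Polynomial.algebraMap_apply, Algebra.algebraMap_self, RingHom.id_apply, Sum.elim_inl,
      Matrix.cons_val_zero, Matrix.cons_val_one] at this ⊢
    linear_combination this
  · refine Ideal.mem_span_pair.2 ⟨0, -Polynomial.C (Polynomial.C (w.rep 0 - d * w.rep 1)), ?_⟩
    have : Polynomial.C (Polynomial.C (w.rep 0 - d * w.rep 1)) *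
        Polynomial.C (Polynomial.C (w.rep 1 / (w.rep 0 - d * w.rep 1))) =
        (Polynomial.C (Polynomial.C (w.rep 1)) : Polynomial (Polynomial ℂ)) := by
      rw [← Polynomial.C_mul, ← Polynomial.C_mul, mul_div_cancel₀ _ hw']
    simp only [chart, map_sub, map_mul, map_add, map_one, MvPolynomial.aeval_X,
      MvPolynomial.aeval_C,
      Polynomial.algebraMap_apply, Algebra.algebraMap_self, RingHom.id_apply, Sum.elim_inr,
      Matrix.cons_val_zero, Matrix.cons_val_one] at this ⊢
    linear_combination this

/-- The linear form of a point of the line, in variables `f 0`, `f 1`. -/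
def linForm (f : Fin 2 → Fin 2 ⊕ Fin 2) (v : ProjLine) : R4 :=
  C (v.rep 1) * X (f 0) - C (v.rep 0) * X (f 1)

theorem linForm_ne_zero_s10 (f : Fin 2 → Fin 2 ⊕ Fin 2) (hf : f 0 ≠ f 1) (v : ProjLine) :
    linForm f v ≠ 0 := by
  intro h
  apply v.rep_nonzero
  funext i
  fin_cases i
  · have := congrArg (MvPolynomial.eval (fun i => if i = f 1 then (1 : ℂ) else 0)) h
    simpa [linForm, hf] using this
  · have := congrArg (MvPolynomial.eval (fun i => if i = f 0 then (1 : ℂ) else 0)) h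
    simpa [linForm, hf.symm] using this

theorem linForm_homog (f : Fin 2 → Fin 2 ⊕ Fin 2) (n : ℕ × ℕ) (hf : ∀ i, biWeight (f i) = n)
    (v : ProjLine) : IsWeightedHomogeneous biWeight (linForm f v) n := by
  have h : ∀ (z : ℂ) i, IsWeightedHomogeneous biWeight (C z * X (f i) : R4) n := by
    intro z i
    have := (isWeightedHomogeneous_C biWeight z).mul (isWeightedHomogeneous_X ℂ biWeight (f i))
    rwa [zero_add, hf i] at this
  exact (weightedHomogeneousSubmodule ℂ biWeight n).sub_mem (h _ 0) (h _ 1)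

theorem upper_bound (ZV ZH : Finset ProjLine) (i j p q : ℕ)
    (hp : ZV.card * i ≤ p) (hq : ZH.card * j ≤ q) :
    ∃ F ∈ symbPow (ZV ×ˢ ZH) (i + j), F ≠ 0 ∧ IsBiForm F p q := by
  refine ⟨((∏ v ∈ ZV, linForm Sum.inl v) ^ i * (∏ w ∈ ZH, linForm Sum.inr w) ^ j) *
    (X (Sum.inl 0) ^ (p - ZV.card * i) * X (Sum.inr 0) ^ (q - ZH.card * j)), ?_, ?_, ?_⟩
  · simp only [symbPow, Submodule.mem_iInf]
    rintro ⟨v, w⟩ hvw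
    obtain ⟨hv, hw⟩ := Finset.mem_product.1 hvw
    refine Ideal.mul_mem_right _ _ ?_
    rw [pow_add]
    refine Ideal.mul_mem_mul (Ideal.pow_mem_pow ?_ _) (Ideal.pow_mem_pow ?_ _)
    · refine Ideal.mem_of_dvd _ (Finset.dvd_prod_of_mem _ hv) (Ideal.subset_span ?_)
      left; rfl
    · refine Ideal.mem_of_dvd _ (Finset.dvd_prod_of_mem _ hw) (Ideal.subset_span ?_)
      right; rfl
  · refine mul_ne_zero (mul_ne_zero (pow_ne_zero _ ?_) (pow_ne_zero _ ?_))
      (mul_ne_zero (pow_ne_zero _ (X_ne_zero _)) (pow_ne_zero _ (X_ne_zero _)))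
    · exact Finset.prod_ne_zero_iff.2 fun v _ => linForm_ne_zero_s10 _ (by simp) v
    · exact Finset.prod_ne_zero_iff.2 fun v _ => linForm_ne_zero_s10 _ (by simp) v
  · have h1 := IsWeightedHomogeneous.prod (w := biWeight) ZV (linForm Sum.inl) (fun _ => (1, 0))
      (fun v _ => linForm_homog _ _ (by intro i; rfl) v)
    have h2 := IsWeightedHomogeneous.prod (w := biWeight) ZH (linForm Sum.inr) (fun _ => (0, 1))
      (fun v _ => linForm_homog _ _ (by intro i; rfl) v)
    have h3 := (isWeightedHomogeneous_X ℂ biWeight (Sum.inl 0)).pow (p - ZV.card * i)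
    have h4 := (isWeightedHomogeneous_X ℂ biWeight (Sum.inr 0)).pow (q - ZH.card * j)
    have h5 := ((h1.pow i).mul (h2.pow j)).mul (h3.mul h4)
    unfold IsBiForm
    convert h5 using 1
    simp [biWeight, Prod.ext_iff]
    constructor
    · rw [mul_comm i]; omega
    · rw [mul_comm j]; omega

theorem alphaStar_grid (ZV ZH : Finset ProjLine) (hV : ZV.Nonempty) (hH : ZH.Nonempty) (m : ℕ) :
    alphaStar (symbPow (ZV ×ˢ ZH) m) = sInf {t : ℕ | m ≤ t / ZV.card + t / ZH.card} := by
  have ha : 0 < ZV.card := hV.card_pos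
  have hb : 0 < ZH.card := hH.card_pos
  unfold alphaStar
  congr 1
  ext t
  simp only [Set.mem_ofPred_eq]
  constructor
  · rintro ⟨F, hF, hF0, hFb⟩
    obtain ⟨i, h1, h2⟩ := lower_bound ZV ZH hV m t t F hF0 hFb hF
    have h3 : i ≤ t / ZV.card := (Nat.le_div_iff_mul_le ha).2 (by rwa [mul_comm])
    have h4 : m - i ≤ t / ZH.card := (Nat.le_div_iff_mul_le hb).2 (by rwa [mul_comm])
    omega
  · intro h
    obtain ⟨F, hF, hF0, hFb⟩ := upper_bound ZV ZH (t / ZV.card) (t / ZH.card) t t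
      (Nat.mul_div_le _ _) (Nat.mul_div_le _ _)
    refine ⟨F, ?_, hF0, hFb⟩
    simp only [symbPow, Submodule.mem_iInf] at hF ⊢
    exact fun P hP => Ideal.pow_le_pow_right h (hF P hP)

theorem sInf_eq_of (S : Set ℕ) (t : ℕ) (h : t ∈ S) (h' : ∀ s < t, s ∉ S) : sInf S = t := by
  refine le_antisymm (Nat.sInf_le h) ?_
  by_contra hlt
  exact h' _ (not_le.1 hlt) (Nat.sInf_mem ⟨t, h⟩)

theorem count_lt (a b k s : ℕ) (ha : 1 ≤ a) (hb : 1 ≤ b) (hk : 1 ≤ k) (hs : s < k * a * b) :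
    s / a + s / b + 2 ≤ k * (a + b) := by
  have h1 : s / a < k * b := (Nat.div_lt_iff_lt_mul ha).2 (by nlinarith)
  have h2 : s / b < k * a := (Nat.div_lt_iff_lt_mul hb).2 (by nlinarith)
  rw [mul_add]
  omega

theorem count_at (a b k s : ℕ) (ha : 1 ≤ a) (hb : 1 ≤ b) :
    (k * a * b + s) / a + (k * a * b + s) / b = k * (a + b) + (s / a + s / b) := by
  have h1 : (k * a * b + s) / a = k * b + s / a := by
    rw [show k * a * b + s = s + a * (k * b) by ring, Nat.add_mul_div_left _ _ ha]; ring
  have h2 : (k * a * b + s) / b = k * a + s / b := by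
    rw [show k * a * b + s = s + b * (k * a) by ring, Nat.add_mul_div_left _ _ hb]; ring
  rw [h1, h2]; ring

/-- For an `(a,b)`-grid `Z = Z_V × Z_H` in `ℙ¹ × ℙ¹` with `a, b ≥ 1`, the jump function
`f(Z;m) = α*(I^{(m)}) - α*(I^{(m-1)})` takes the value `0` for infinitely many `m ≥ 1`
and the value `min{a,b}` for infinitely many `m ≥ 1`. -/
theorem grid_jumpFun_values (a b : ℕ) (ha : 1 ≤ a) (hb : 1 ≤ b)
    (ZV ZH : Finset ProjLine) (hV : ZV.card = a) (hH : ZH.card = b) :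
    {m : ℕ | 1 ≤ m ∧ jumpFun (ZV ×ˢ ZH) m = 0}.Infinite ∧
    {m : ℕ | 1 ≤ m ∧ jumpFun (ZV ×ˢ ZH) m = (min a b : ℤ)}.Infinite := by
  have hVn : ZV.Nonempty := Finset.card_pos.1 (by omega)
  have hHn : ZH.Nonempty := Finset.card_pos.1 (by omega)
  have A : ∀ k, 1 ≤ k → alphaStar (symbPow (ZV ×ˢ ZH) (k * (a + b))) = k * a * b := by
    intro k hk
    rw [alphaStar_grid ZV ZH hVn hHn, hV, hH]
    apply sInf_eq_of
    · have := count_at a b k 0 ha hb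
      simp only [Set.mem_ofPred_eq, add_zero, Nat.zero_div] at this ⊢
      omega
    · intro s hs h
      have := count_lt a b k s ha hb hk hs
      simp only [Set.mem_ofPred_eq] at h
      omega
  have B : ∀ k, 1 ≤ k → alphaStar (symbPow (ZV ×ˢ ZH) (k * (a + b) - 1)) = k * a * b := by
    intro k hk
    rw [alphaStar_grid ZV ZH hVn hHn, hV, hH]
    apply sInf_eq_of
    · have := count_at a b k 0 ha hb
      simp only [Set.mem_ofPred_eq, add_zero, Nat.zero_div] at this ⊢
      omega
    · intro s hs h
      have := count_lt a b k s ha hb hk hs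
      simp only [Set.mem_ofPred_eq] at h
      omega
  have D : ∀ k, 1 ≤ k →
      alphaStar (symbPow (ZV ×ˢ ZH) (k * (a + b) + 1)) = k * a * b + min a b := by
    intro k hk
    rw [alphaStar_grid ZV ZH hVn hHn, hV, hH]
    apply sInf_eq_of
    · have h1 := count_at a b k (min a b) ha hb
      have h2 : 1 ≤ min a b / a + min a b / b := by
        rcases le_total a b with h | h
        · rw [min_eq_left h, Nat.div_self ha]; exact Nat.le_add_right _ _
        · rw [min_eq_right h, Nat.div_self hb]; exact Nat.le_add_left _ _
      simp only [Set.mem_ofPred_eq]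
      omega
    · intro s hs h
      simp only [Set.mem_ofPred_eq] at h
      rcases lt_or_ge s (k * a * b) with h1 | h1
      · have := count_lt a b k s ha hb hk h1
        omega
      · obtain ⟨r, rfl⟩ := Nat.exists_eq_add_of_le h1
        have h2 := count_at a b k r ha hb
        rw [Nat.div_eq_of_lt (show r < a by omega), Nat.div_eq_of_lt (show r < b by omega)] at h2
        omega
  have hle : ∀ k, k ≤ k * (a + b) := fun k => Nat.le_mul_of_pos_right k (by omega)
  constructor
  · refine Set.infinite_of_forall_exists_gt fun n => ⟨(n + 1) * (a + b), ⟨?_, ?_⟩, ?_⟩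
    · have := hle (n + 1); omega
    · rw [jumpFun, A _ (by omega), B _ (by omega), sub_self]
    · have := hle (n + 1); omega
  · refine Set.infinite_of_forall_exists_gt fun n => ⟨(n + 1) * (a + b) + 1, ⟨?_, ?_⟩, ?_⟩
    · omega
    · rw [jumpFun, Nat.add_sub_cancel, A _ (by omega), D _ (by omega)]
      push_cast
      ring
    · have := hle (n + 1); omega
end
end
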